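/- arXiv:1904.10203 — 4 statements merged into one kernel-verified Lean document; each statement's English description precedes it below -/
import Mathlib

section
/- Let s be a complex number such that cosh(s) is real and satisfies −1 ≤ Re(cosh s) ≤ 1. Then s is purely imaginary, i.e. Re(s) = 0. -/
/-!
The fibres of the complex `cosh` are the sets `± w + 2πiℤ`, so `|Re s|` depends only on `cosh s`.
A real number `x ∈ [-1, 1]` is `cos θ = cosh (iθ)` for `θ = arccos x`, and `Re (iθ) = 0`.
-/

theorem abs_im_eq_abs_im_of_cos_eq_cos {z w : ℂ} (h : Complex.cos z = Complex.cos w) :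
    |z.im| = |w.im| := by
  obtain ⟨k, rfl | rfl⟩ := Complex.cos_eq_cos_iff.mp h <;> simp

theorem abs_re_eq_abs_re_of_cosh_eq_cosh {z w : ℂ} (h : Complex.cosh z = Complex.cosh w) :
    |z.re| = |w.re| := by
  rw [← Complex.cos_mul_I, ← Complex.cos_mul_I] at h
  simpa only [Complex.mul_I_im] using abs_im_eq_abs_im_of_cos_eq_cos h

theorem cosh_arccos_mul_I {x : ℝ} (hx : x ∈ Set.Icc (-1) 1) :
    Complex.cosh (Real.arccos x * Complex.I) = x := by
  rw [Complex.cosh_mul_I, ← Complex.ofReal_cos, Real.cos_arccos hx.1 hx.2]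

/-- If `cosh s` is real with real part in `[-1, 1]`, then `s` is purely imaginary. -/
theorem cosh_real_in_Icc_imp_purely_imaginary (s : ℂ)
    (h_real : (Complex.cosh s).im = 0)
    (h_le : -1 ≤ (Complex.cosh s).re) (h_ge : (Complex.cosh s).re ≤ 1) :
    s.re = 0 := by
  set x := (Complex.cosh s).re
  have cosh_eq_ofReal : Complex.cosh s = x := Complex.ext rfl h_real
  have cosh_eq_cosh : Complex.cosh s = Complex.cosh (Real.arccos x * Complex.I) :=
    cosh_eq_ofReal.trans (cosh_arccos_mul_I ⟨h_le, h_ge⟩).symm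
  have abs_re_eq_zero : |s.re| = 0 := by
    simpa using abs_re_eq_abs_re_of_cosh_eq_cosh cosh_eq_cosh
  exact abs_eq_zero.mp abs_re_eq_zero
end

section
/- Let ε be a real number with 0 < ε < (π/2)², and let x, y, v be real numbers with x > 0 and v² ≤ x². Then Real.arccos(1 − 2(y² + v²)/(x² + y²)) < √ε if and only if 2v² − (1 − cos √ε)·x² + (1 + cos √ε)·y² < 0. -/
open Real

/-! The cosine is strictly decreasing on `[0, π]`, so `arccos t < θ` means `cos θ < t`. Clearing the
denominator `x² + y²` of `t = 1 - 2(y² + v²)/(x² + y²)` turns this into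
`2(y² + v²) < (1 - cos θ)(x² + y²)`, and the terms in `y²` combine because
`2 - (1 - cos θ) = 1 + cos θ`. -/

theorem arccos_lt_iff_cos_lt {t θ : ℝ} (ht : t ∈ Set.Icc (-1) 1) (hθ : θ ∈ Set.Icc 0 π) :
    arccos t < θ ↔ cos θ < t := by
  rw [← strictAntiOn_cos.lt_iff_gt hθ ⟨arccos_nonneg t, arccos_le_pi t⟩, cos_arccos ht.1 ht.2]

theorem one_sub_two_mul_div_mem_Icc {K : Type*} [Field K] [LinearOrder K] [IsStrictOrderedRing K]
    {a b : K} (ha : 0 ≤ a) (hab : a ≤ b) : 1 - 2 * a / b ∈ Set.Icc (-1) 1 := by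
  have hdiv_nonneg : 0 ≤ a / b := div_nonneg ha (ha.trans hab)
  have hdiv_le_one : a / b ≤ 1 := div_le_one_of_le₀ hab (ha.trans hab)
  rw [mul_div_assoc]
  constructor <;> linarith

theorem grauert_tube_defining_inequality_general {θ x y v : ℝ} (hθ : θ ∈ Set.Icc 0 π)
    (hxy : 0 < x ^ 2 + y ^ 2) (hv : v ^ 2 ≤ x ^ 2) :
    arccos (1 - 2 * (y ^ 2 + v ^ 2) / (x ^ 2 + y ^ 2)) < θ ↔
      2 * v ^ 2 - (1 - cos θ) * x ^ 2 + (1 + cos θ) * y ^ 2 < 0 := by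
  have ht : 1 - 2 * (y ^ 2 + v ^ 2) / (x ^ 2 + y ^ 2) ∈ Set.Icc (-1) 1 :=
    one_sub_two_mul_div_mem_Icc (by positivity) (by linarith)
  calc arccos (1 - 2 * (y ^ 2 + v ^ 2) / (x ^ 2 + y ^ 2)) < θ
    _ ↔ cos θ < 1 - 2 * (y ^ 2 + v ^ 2) / (x ^ 2 + y ^ 2) := arccos_lt_iff_cos_lt ht hθ
    _ ↔ 2 * (y ^ 2 + v ^ 2) < (1 - cos θ) * (x ^ 2 + y ^ 2) := by
      rw [lt_sub_comm, div_lt_iff₀ hxy]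
    _ ↔ 2 * v ^ 2 - (1 - cos θ) * x ^ 2 + (1 + cos θ) * y ^ 2 < 0 := by
      rw [← sub_neg]
      ring_nf

/-- For `0 < ε < (π/2)²`, `x > 0`, `v² ≤ x²`, the inequality
`arccos(1 - 2(y² + v²)/(x² + y²)) < √ε` holds iff
`2v² - (1 - cos √ε)·x² + (1 + cos √ε)·y² < 0`. -/
theorem grauert_tube_defining_inequality (ε x y v : ℝ)
    (hε₀ : 0 < ε) (hε₁ : ε < (π / 2) ^ 2) (hx : 0 < x) (hv : v ^ 2 ≤ x ^ 2) :
    Real.arccos (1 - 2 * (y ^ 2 + v ^ 2) / (x ^ 2 + y ^ 2)) < Real.sqrt ε ↔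
    2 * v ^ 2 - (1 - Real.cos (Real.sqrt ε)) * x ^ 2
      + (1 + Real.cos (Real.sqrt ε)) * y ^ 2 < 0 := by
  have hsqrt : √ε < π / 2 := (sqrt_lt' pi_div_two_pos).2 hε₁
  exact grauert_tube_defining_inequality_general ⟨sqrt_nonneg ε, by linarith [pi_pos]⟩
    (by positivity) hv
end

section
/- Let ε be a real number with 0 < ε < (π/2)², and define R : ℂ × ℂ → ℝ by R(w, z) = 2(Im w)² − (1 − cos √ε)·(Re z)² + (1 + cos √ε)·(Im z)². Then for every point p ∈ ℂ² and every direction (a, b) ∈ ℂ × ℂ, the sum of the second derivative (Hessian) of R at p evaluated on ((a,b),(a,b)) and on ((ia,ib),(ia,ib)) equals 4(|a|² + cos(√ε)·|b|²); in particular this sum is strictly positive whenever (a, b) ≠ (0, 0), so R is strictly plurisubharmonic. -/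
open Real

/-! For complex linear `ℓ`, replacing a direction `v` by `i v` exchanges `(Re ℓ v)²` and
`(Im ℓ v)²`, so the functions `(Re ℓ)²` and `(Im ℓ)²` have the same Levi form `‖ℓ v‖² / 2`. The
Levi form of `R` therefore only sees the sums of the coefficients of `(Re ·)²` and `(Im ·)²` in
each variable, which are `2` in `w` and `(1 + cos √ε) - (1 - cos √ε) = 2 cos √ε` in `z`. -/

@[fun_prop]
theorem contDiff_re {n : WithTop ℕ∞} : ContDiff ℝ n Complex.re :=
  Complex.reCLM.contDiff

@[fun_prop]
theorem contDiff_im {n : WithTop ℕ∞} : ContDiff ℝ n Complex.im :=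
  Complex.imCLM.contDiff

theorem iteratedFDeriv_two_clm_sq {𝕜 E : Type*} [NontriviallyNormedField 𝕜]
    [NormedAddCommGroup E] [NormedSpace 𝕜 E] (l : E →L[𝕜] 𝕜) (p u v : E) :
    iteratedFDeriv 𝕜 2 (fun q => l q ^ 2) p ![u, v] = 2 * l u * l v := by
  have hfderiv : fderiv 𝕜 (fun q => l q ^ 2) = ((2 : 𝕜) • l.smulRight l : E →L[𝕜] E →L[𝕜] 𝕜) := by
    funext q
    ext w
    simp [(l.hasFDerivAt.pow 2).fderiv, mul_assoc]
  rw [iteratedFDeriv_two_apply, hfderiv, ContinuousLinearMap.fderiv]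
  simp [mul_assoc]

section LeviForm

variable {E : Type*} [NormedAddCommGroup E] [NormedSpace ℝ E] [Module ℂ E]

/-- The Levi form of `f` at `p` in the complex direction `v`, written with the real Hessian.
Its positivity for all `v ≠ 0` is strict plurisubharmonicity. The real and the complex structure
on `E` are separate instances, so that `ℂ × ℂ` may carry its product real structure. -/
noncomputable def leviForm (f : E → ℝ) (p v : E) : ℝ :=
  (iteratedFDeriv ℝ 2 f p ![v, v]
    + iteratedFDeriv ℝ 2 f p ![Complex.I • v, Complex.I • v]) / 4

theorem four_mul_leviForm (f : E → ℝ) (p v : E) :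
    4 * leviForm f p v = iteratedFDeriv ℝ 2 f p ![v, v]
      + iteratedFDeriv ℝ 2 f p ![Complex.I • v, Complex.I • v] :=
  mul_div_cancel₀ _ four_ne_zero

theorem leviForm_add {f g : E → ℝ} {p : E} (hf : ContDiffAt ℝ 2 f p) (hg : ContDiffAt ℝ 2 g p)
    (v : E) : leviForm (fun q => f q + g q) p v = leviForm f p v + leviForm g p v := by
  simp only [leviForm, fun_iteratedFDeriv_add_apply hf hg, add_apply]
  ring

theorem leviForm_const_mul {f : E → ℝ} {p : E} (hf : ContDiffAt ℝ 2 f p) (c : ℝ) (v : E) :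
    leviForm (fun q => c * f q) p v = c * leviForm f p v := by
  have hsmul : iteratedFDeriv ℝ 2 (fun q => c * f q) p = c • iteratedFDeriv ℝ 2 f p := by
    simpa only [smul_eq_mul] using iteratedFDeriv_const_smul_apply' (a := c) hf
  simp only [leviForm, hsmul, smul_apply, smul_eq_mul]
  ring

theorem leviForm_clm_sq (l : E →L[ℝ] ℝ) (p v : E) :
    leviForm (fun q => l q ^ 2) p v = (l v ^ 2 + l (Complex.I • v) ^ 2) / 2 := by
  simp only [leviForm, iteratedFDeriv_two_clm_sq]
  ring

variable [IsScalarTower ℝ ℂ E]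

theorem leviForm_re_sq (l : E →L[ℂ] ℂ) (p v : E) :
    leviForm (fun q => (l q).re ^ 2) p v = ‖l v‖ ^ 2 / 2 := by
  refine (leviForm_clm_sq (Complex.reCLM.comp (l.restrictScalars ℝ)) p v).trans ?_
  simp [← Complex.sq_norm_sub_sq_re]

theorem leviForm_im_sq (l : E →L[ℂ] ℂ) (p v : E) :
    leviForm (fun q => (l q).im ^ 2) p v = ‖l v‖ ^ 2 / 2 := by
  refine (leviForm_clm_sq (Complex.imCLM.comp (l.restrictScalars ℝ)) p v).trans ?_
  simp [← Complex.sq_norm_sub_sq_re]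

theorem leviForm_re_sq_add_im_sq (l : E →L[ℂ] ℂ) (α β : ℝ) (p v : E) :
    leviForm (fun q => α * (l q).re ^ 2 + β * (l q).im ^ 2) p v
      = (α + β) / 2 * ‖l v‖ ^ 2 := by
  have hl : ContDiff ℝ 2 l := (l.restrictScalars ℝ).contDiff
  rw [leviForm_add (by fun_prop) (by fun_prop), leviForm_const_mul (by fun_prop),
    leviForm_const_mul (by fun_prop), leviForm_re_sq, leviForm_im_sq]
  ring

end LeviForm

/-- The defining function `R` of the tube, with an arbitrary real `c` in place of `cos √ε`. -/
def grauertTubeFunction (c : ℝ) (q : ℂ × ℂ) : ℝ :=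
  2 * q.1.im ^ 2 - (1 - c) * q.2.re ^ 2 + (1 + c) * q.2.im ^ 2

theorem leviForm_grauertTubeFunction (c : ℝ) (p v : ℂ × ℂ) :
    leviForm (grauertTubeFunction c) p v = ‖v.1‖ ^ 2 + c * ‖v.2‖ ^ 2 := by
  have hw := leviForm_re_sq_add_im_sq (.fst ℂ ℂ ℂ) 0 2 p v
  have hz := leviForm_re_sq_add_im_sq (.snd ℂ ℂ ℂ) (c - 1) (1 + c) p v
  simp only [ContinuousLinearMap.coe_fst', ContinuousLinearMap.coe_snd'] at hw hz
  have hsplit : grauertTubeFunction c = fun q =>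
      (0 * q.1.re ^ 2 + 2 * q.1.im ^ 2) + ((c - 1) * q.2.re ^ 2 + (1 + c) * q.2.im ^ 2) := by
    funext q
    simp only [grauertTubeFunction]
    ring
  rw [hsplit, leviForm_add (by fun_prop) (by fun_prop), hw, hz]
  ring

theorem leviForm_grauertTubeFunction_pos {c : ℝ} (hc : 0 < c) (p : ℂ × ℂ) {v : ℂ × ℂ}
    (hv : v ≠ 0) : 0 < leviForm (grauertTubeFunction c) p v := by
  rw [leviForm_grauertTubeFunction]
  by_cases hfst : v.1 = 0
  · have hsnd : v.2 ≠ 0 := fun hsnd => hv (Prod.ext hfst hsnd)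
    positivity
  · positivity

theorem cos_sqrt_pos {x : ℝ} (hx : x < (π / 2) ^ 2) : 0 < cos √x :=
  cos_pos_of_mem_Ioo ⟨(neg_neg_of_pos pi_div_two_pos).trans_le (sqrt_nonneg x),
    (sqrt_lt' pi_div_two_pos).2 hx⟩

theorem grauert_tube_strictly_plurisubharmonic_general (c : ℝ) (p : ℂ × ℂ) (a b : ℂ) :
    (iteratedFDeriv ℝ 2 (grauertTubeFunction c) p ![(a, b), (a, b)]
      + iteratedFDeriv ℝ 2 (grauertTubeFunction c) p
        ![(Complex.I * a, Complex.I * b), (Complex.I * a, Complex.I * b)]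
      = 4 * (‖a‖ ^ 2 + c * ‖b‖ ^ 2)) ∧
    (0 < c → (a, b) ≠ (0, 0) →
      0 < iteratedFDeriv ℝ 2 (grauertTubeFunction c) p ![(a, b), (a, b)]
        + iteratedFDeriv ℝ 2 (grauertTubeFunction c) p
          ![(Complex.I * a, Complex.I * b), (Complex.I * a, Complex.I * b)]) := by
  have hhessian := four_mul_leviForm (grauertTubeFunction c) p (a, b)
  simp only [Prod.smul_mk, smul_eq_mul] at hhessian
  rw [← hhessian]
  exact ⟨by rw [leviForm_grauertTubeFunction],
    fun hc hab => mul_pos four_pos (leviForm_grauertTubeFunction_pos hc p hab)⟩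

/-- The function `R(w,z) = 2(Im w)² - (1 - cos √ε)(Re z)² + (1 + cos √ε)(Im z)²` is
strictly plurisubharmonic: for every point `p` and direction `(a,b)`, the sum of its
real Hessian evaluated on `(a,b)` and on `(ia, ib)` equals `4(|a|² + cos(√ε)|b|²)`,
which is strictly positive when `(a,b) ≠ 0`. -/
theorem grauert_tube_strictly_plurisubharmonic (ε : ℝ)
    (hε₀ : 0 < ε) (hε₁ : ε < (π / 2) ^ 2) (p : ℂ × ℂ) (a b : ℂ) :
    (iteratedFDeriv ℝ 2
        (fun q : ℂ × ℂ =>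
          2 * q.1.im ^ 2 - (1 - Real.cos (Real.sqrt ε)) * q.2.re ^ 2
            + (1 + Real.cos (Real.sqrt ε)) * q.2.im ^ 2)
        p ![(a, b), (a, b)]
      + iteratedFDeriv ℝ 2
        (fun q : ℂ × ℂ =>
          2 * q.1.im ^ 2 - (1 - Real.cos (Real.sqrt ε)) * q.2.re ^ 2
            + (1 + Real.cos (Real.sqrt ε)) * q.2.im ^ 2)
        p ![(Complex.I * a, Complex.I * b), (Complex.I * a, Complex.I * b)]
      = 4 * (‖a‖ ^ 2 + Real.cos (Real.sqrt ε) * ‖b‖ ^ 2)) ∧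
    ((a, b) ≠ (0, 0) →
      0 < iteratedFDeriv ℝ 2
        (fun q : ℂ × ℂ =>
          2 * q.1.im ^ 2 - (1 - Real.cos (Real.sqrt ε)) * q.2.re ^ 2
            + (1 + Real.cos (Real.sqrt ε)) * q.2.im ^ 2)
        p ![(a, b), (a, b)]
      + iteratedFDeriv ℝ 2
        (fun q : ℂ × ℂ =>
          2 * q.1.im ^ 2 - (1 - Real.cos (Real.sqrt ε)) * q.2.re ^ 2
            + (1 + Real.cos (Real.sqrt ε)) * q.2.im ^ 2)
        p ![(Complex.I * a, Complex.I * b), (Complex.I * a, Complex.I * b)]) :=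
  (grauert_tube_strictly_plurisubharmonic_general (cos √ε) p a b).imp_right
    fun hpos => hpos (cos_sqrt_pos hε₁)
end

section
/- Let x, y be real numbers with x > 0. Then the set { (1 + α·x)/(√(1 + α²)·√(1 + x² + y²)) : α ∈ ℝ, α > 0 } has greatest element √(1 + x²)/√(1 + x² + y²), attained at α = x. -/
/-!
The quotient is the cosine of the angle between `p = (1, x, y)` and `u = (1, α, 0)`. The vector
`q = (1, x, 0)` is the orthogonal projection of `p` to the plane of the vectors `u`, so that
`⟪u, p⟫ = ⟪u, q⟫`. This gives the cosine rule for right spherical triangles,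
`cos ∠(u, p) = cos ∠(u, q) · ‖q‖ / ‖p‖`, whose right-hand side is largest at `u = q`.
-/

open InnerProductGeometry
open scoped RealInnerProductSpace

section SphericalRightTriangle

variable {E : Type*} [NormedAddCommGroup E] [InnerProductSpace ℝ E] {p q u : E}

theorem cos_angle_eq_cos_angle_mul_norm_div_norm_of_inner_eq (h : ⟪u, p⟫ = ⟪u, q⟫) :
    Real.cos (angle u p) = Real.cos (angle u q) * (‖q‖ / ‖p‖) := by
  rw [cos_angle, cos_angle, h]
  obtain rfl | hq := eq_or_ne q 0
  · simp
  · have : ‖q‖ ≠ 0 := norm_ne_zero_iff.mpr hq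
    field_simp

theorem cos_angle_le_norm_div_norm_of_inner_eq (h : ⟪u, p⟫ = ⟪u, q⟫) :
    Real.cos (angle u p) ≤ ‖q‖ / ‖p‖ := by
  rw [cos_angle_eq_cos_angle_mul_norm_div_norm_of_inner_eq h]
  exact mul_le_of_le_one_left (by positivity) (Real.cos_le_one _)

theorem cos_angle_eq_norm_div_norm_of_inner_eq (h : ⟪q, p⟫ = ⟪q, q⟫) :
    Real.cos (angle q p) = ‖q‖ / ‖p‖ := by
  rw [cos_angle_eq_cos_angle_mul_norm_div_norm_of_inner_eq h]
  obtain rfl | hq := eq_or_ne q 0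
  · simp
  · rw [angle_self hq, Real.cos_zero, one_mul]

end SphericalRightTriangle

/-- The vector `(1, x, y)`, whose normalization is the unit vector attached to the point
`[1 : x + iy]` of the complex projective line. It is left unnormalized because angles do not depend
on lengths. -/
def chartVector (x y : ℝ) : EuclideanSpace ℝ (Fin 3) :=
  !₂[1, x, y]

theorem inner_chartVector (a b x y : ℝ) :
    ⟪chartVector a b, chartVector x y⟫ = 1 + a * x + b * y := by
  simp [chartVector, Fin.sum_univ_three, PiLp.inner_apply, mul_comm]

theorem norm_chartVector (x y : ℝ) : ‖chartVector x y‖ = √(1 + x ^ 2 + y ^ 2) := by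
  simp [chartVector, Fin.sum_univ_three, EuclideanSpace.norm_eq]

theorem norm_chartVector_zero (x : ℝ) : ‖chartVector x 0‖ = √(1 + x ^ 2) := by
  simp [norm_chartVector]

theorem inner_chartVector_zero_eq (a x y : ℝ) :
    ⟪chartVector a 0, chartVector x y⟫ = ⟪chartVector a 0, chartVector x 0⟫ := by
  simp [inner_chartVector]

theorem cos_angle_chartVector_zero (a x y : ℝ) :
    Real.cos (angle (chartVector a 0) (chartVector x y)) =
      (1 + a * x) / (√(1 + a ^ 2) * √(1 + x ^ 2 + y ^ 2)) := by
  rw [cos_angle, inner_chartVector, norm_chartVector_zero, norm_chartVector, zero_mul, add_zero]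

theorem spherical_distance_sup_general {S : Set ℝ} {x : ℝ} (hx : x ∈ S) (y : ℝ) :
    IsGreatest
      {t : ℝ | ∃ α ∈ S, t = (1 + α * x) / (√(1 + α ^ 2) * √(1 + x ^ 2 + y ^ 2))}
      (√(1 + x ^ 2) / √(1 + x ^ 2 + y ^ 2)) ∧
    (1 + x * x) / (√(1 + x ^ 2) * √(1 + x ^ 2 + y ^ 2)) = √(1 + x ^ 2) / √(1 + x ^ 2 + y ^ 2) := by
  simp only [← cos_angle_chartVector_zero]
  rw [← norm_chartVector_zero, ← norm_chartVector]
  have attained := cos_angle_eq_norm_div_norm_of_inner_eq (inner_chartVector_zero_eq x x y)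
  refine ⟨⟨⟨x, hx, attained.symm⟩, ?_⟩, attained⟩
  rintro _ ⟨α, -, rfl⟩
  exact cos_angle_le_norm_div_norm_of_inner_eq (inner_chartVector_zero_eq α x y)

/-- For `x > 0`, the set `{(1 + αx)/(√(1+α²)·√(1+x²+y²)) : α > 0}` has greatest element
`√(1+x²)/√(1+x²+y²)`, attained at `α = x`. -/
theorem spherical_distance_sup (x y : ℝ) (hx : 0 < x) :
    IsGreatest
      {t : ℝ | ∃ α : ℝ, 0 < α ∧
        t = (1 + α * x) / (Real.sqrt (1 + α ^ 2) * Real.sqrt (1 + x ^ 2 + y ^ 2))}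
      (Real.sqrt (1 + x ^ 2) / Real.sqrt (1 + x ^ 2 + y ^ 2)) ∧
    (1 + x * x) / (Real.sqrt (1 + x ^ 2) * Real.sqrt (1 + x ^ 2 + y ^ 2))
      = Real.sqrt (1 + x ^ 2) / Real.sqrt (1 + x ^ 2 + y ^ 2) :=
  spherical_distance_sup_general (S := Set.Ioi 0) hx y
end
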